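/- arXiv:2210.12470 — 2 statements merged into one kernel-verified Lean document; each statement's English description precedes it below -/
import Mathlib

section
/- Consider the Hedge algorithm over n actions with learning rate η > 0: it maintains weights w^1 = (1,...,1), plays the distribution x^t with x^t(j) = w^t(j)/∑_k w^t(k), and after observing the loss vector l^t updates w^{t+1}(j) = w^t(j)·exp(−η l^t(j)). Then for any sequence of loss vectors l^1,...,l^T with nonnegative entries and any fixed action i* ∈ {1,...,n}, the cumulative expected loss satisfies ∑_{t=1}^T ⟨x^t, l^t⟩ − ∑_{t=1}^T l^t(i*) ≤ (ln n)/η + η ∑_{t=1}^T ⟨x^t, (l^t)²⟩, where (l^t)² denotes the vector of squared losses (l^t(j))². -/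
noncomputable section

/-- Hedge weights: `w 0 j = 1`, `w (t+1) j = w t j * exp (−η · l t j)`. -/
def hedgeW {n : ℕ} (η : ℝ) (l : ℕ → Fin n → ℝ) : ℕ → Fin n → ℝ
  | 0 => fun _ => 1
  | t + 1 => fun j => hedgeW η l t j * Real.exp (-η * l t j)

/-- The distribution played by Hedge at round `t`:  `x t j = w t j / ∑ k w t k`. -/
def hedgeX {n : ℕ} (η : ℝ) (l : ℕ → Fin n → ℝ) (t : ℕ) (j : Fin n) : ℝ :=
  hedgeW η l t j / ∑ k, hedgeW η l t k

theorem hedge_exp_aux (u : ℝ) (hu : 0 ≤ u) : Real.exp (-u) ≤ 1 - u + u ^ 2 := by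
  have h1 := Real.add_one_le_exp u
  have h2 : Real.exp (-u) * Real.exp u = 1 := by rw [← Real.exp_add]; simp
  have h3 := Real.exp_pos (-u)
  have h4 : Real.exp (-u) * (u + 1) ≤ 1 := by
    exact (mul_le_mul_of_nonneg_left h1 h3.le).trans h2.le
  have h5 : 0 ≤ u ^ 3 := by positivity
  refine le_of_mul_le_mul_right (a := u + 1) ?_ (by linarith)
  nlinarith

theorem hedgeW_pos {n : ℕ} (η : ℝ) (l : ℕ → Fin n → ℝ) (t : ℕ) (j : Fin n) :
    0 < hedgeW η l t j := by
  induction t with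
  | zero => simp [hedgeW]
  | succ t ih => simp only [hedgeW]; positivity

theorem hedgeW_eq {n : ℕ} (η : ℝ) (l : ℕ → Fin n → ℝ) (t : ℕ) (j : Fin n) :
    hedgeW η l t j = Real.exp (-η * ∑ s ∈ Finset.range t, l s j) := by
  induction t with
  | zero => simp [hedgeW]
  | succ t ih =>
    simp only [hedgeW]
    rw [ih, ← Real.exp_add, Finset.sum_range_succ, mul_add]

theorem hedge_step {n : ℕ} (η : ℝ) (hη : 0 < η) (l : ℕ → Fin n → ℝ)
    (hl : ∀ t j, 0 ≤ l t j) (istar : Fin n) (t : ℕ) :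
    ∑ j, hedgeW η l (t + 1) j ≤ (∑ j, hedgeW η l t j) *
      Real.exp (-η * (∑ j, hedgeX η l t j * l t j)
        + η ^ 2 * ∑ j, hedgeX η l t j * (l t j) ^ 2) := by
  have hW : 0 < ∑ j, hedgeW η l t j :=
    Finset.sum_pos (fun j _ => hedgeW_pos η l t j) ⟨istar, Finset.mem_univ _⟩
  have hx : ∀ j, hedgeW η l t j = (∑ k, hedgeW η l t k) * hedgeX η l t j := by
    intro j
    unfold hedgeX
    field_simp
  have hexp := Real.add_one_le_exp (-η * (∑ j, hedgeX η l t j * l t j)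
        + η ^ 2 * ∑ j, hedgeX η l t j * (l t j) ^ 2)
  refine le_trans ?_ (mul_le_mul_of_nonneg_left hexp hW.le)
  have h1 : ∑ j, hedgeW η l (t + 1) j ≤
      ∑ j, hedgeW η l t j * (1 - η * l t j + (η * l t j) ^ 2) := by
    refine Finset.sum_le_sum fun j _ => ?_
    simp only [hedgeW]
    refine mul_le_mul_of_nonneg_left ?_ (hedgeW_pos η l t j).le
    rw [neg_mul]
    exact hedge_exp_aux _ (mul_nonneg hη.le (hl t j))
  refine h1.trans (le_of_eq ?_)
  rw [mul_add, mul_one, mul_add]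
  simp only [Finset.mul_sum]
  rw [← Finset.sum_add_distrib, ← Finset.sum_add_distrib]
  refine Finset.sum_congr rfl fun j _ => ?_
  have := hx j
  linear_combination (- η * l t j + (η * l t j) ^ 2) * this

theorem hedge_total {n : ℕ} (η : ℝ) (hη : 0 < η) (l : ℕ → Fin n → ℝ)
    (hl : ∀ t j, 0 ≤ l t j) (istar : Fin n) (T : ℕ) :
    ∑ j, hedgeW η l T j ≤ n *
      Real.exp (-η * (∑ t ∈ Finset.range T, ∑ j, hedgeX η l t j * l t j)
        + η ^ 2 * ∑ t ∈ Finset.range T, ∑ j, hedgeX η l t j * (l t j) ^ 2) := by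
  induction T with
  | zero => simp [hedgeW]
  | succ T ih =>
    refine (hedge_step η hη l hl istar T).trans ?_
    refine (mul_le_mul_of_nonneg_right ih (Real.exp_pos _).le).trans (le_of_eq ?_)
    rw [mul_assoc, ← Real.exp_add, Finset.sum_range_succ, Finset.sum_range_succ]
    congr 2
    ring

/-- regret bound for Hedge.  For any sequence of nonnegative loss vectors
`l^1, ..., l^T` and any fixed action `i⋆`,
`∑_t ⟨x^t, l^t⟩ − ∑_t l^t(i⋆) ≤ (ln n)/η + η ∑_t ⟨x^t, (l^t)²⟩`. -/
theorem stmt0 {n : ℕ} (T : ℕ) (η : ℝ) (hη : 0 < η) (l : ℕ → Fin n → ℝ)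
    (hl : ∀ t j, 0 ≤ l t j) (istar : Fin n) :
    ∑ t ∈ Finset.range T, (∑ j, hedgeX η l t j * l t j) - ∑ t ∈ Finset.range T, l t istar ≤
      Real.log n / η + η * ∑ t ∈ Finset.range T, ∑ j, hedgeX η l t j * (l t j) ^ 2 := by
  have hn : (0 : ℝ) < n := by exact_mod_cast istar.pos
  have h1 := hedge_total η hη l hl istar T
  have h2 : hedgeW η l T istar ≤ ∑ j, hedgeW η l T j :=
    Finset.single_le_sum (fun j _ => (hedgeW_pos η l T j).le) (Finset.mem_univ istar)
  have h3 := h2.trans h1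
  rw [hedgeW_eq] at h3
  have h4 := Real.log_le_log (Real.exp_pos _) h3
  rw [Real.log_mul hn.ne' (Real.exp_pos _).ne', Real.log_exp, Real.log_exp] at h4
  rw [← sub_le_iff_le_add, le_div_iff₀ hη]
  linarith

end
end

section
/- For every ε > 0, every finite general-sum MLSF game (with a unique follower best response Br(a) for every joint leader action a) admits an ε-CSE, i.e., there exists a probability distribution χ over the joint leader action set A such that for every leader i and every swap function s : A_i → A_i, E_{a∼χ}[l_i(a, Br(a))] ≤ E_{a∼χ}[l_i(s(a_i), a_{-i}, Br(s(a_i), a_{-i}))] + ε. -/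
open Finset

/-- Stationary distribution of a nonnegative combination of swap functions. -/
lemma exists_stationary {n : ℕ} (hn : 1 ≤ n) (w : (Fin n → Fin n) → ℝ) (hw : ∀ s, 0 ≤ w s) :
    ∃ p : Fin n → ℝ, (∀ j, 0 ≤ p j) ∧ ∑ j, p j = 1 ∧
      ∀ g : Fin n → ℝ, ∑ s, w s * ∑ j, p j * g (s j) = (∑ s, w s) * ∑ j, p j * g j := by
  classical
  set W := ∑ s, w s with hW
  have hW0 : 0 ≤ W := Finset.sum_nonneg fun s _ => hw s
  let Q : Matrix (Fin n) (Fin n) ℝ := fun j k => ∑ s, w s * if s j = k then 1 else 0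
  have hQ0 : ∀ j k, 0 ≤ Q j k := fun j k => Finset.sum_nonneg fun s _ =>
    mul_nonneg (hw s) (by split_ifs <;> norm_num)
  have hQg : ∀ j (g : Fin n → ℝ), ∑ k, Q j k * g k = ∑ s, w s * g (s j) := by
    intro j g
    simp only [Q, Finset.sum_mul]
    rw [Finset.sum_comm]
    refine Finset.sum_congr rfl fun s _ => ?_
    simp
  have hrow : ∀ j, ∑ k, Q j k = W := by
    intro j
    have := hQg j (fun _ => 1)
    simpa using this
  have hdet : (Q - W • (1 : Matrix (Fin n) (Fin n) ℝ)).det = 0 := by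
    rw [← Matrix.exists_mulVec_eq_zero_iff]
    refine ⟨fun _ => 1, ?_, ?_⟩
    · intro h
      have := congrFun h ⟨0, hn⟩
      simp at this
    · ext j
      rw [Matrix.sub_mulVec, Matrix.smul_mulVec, Matrix.one_mulVec]
      simp [Matrix.mulVec, dotProduct, hrow]
  obtain ⟨v, hv0, hv⟩ := Matrix.exists_vecMul_eq_zero_iff.mpr hdet
  have hv' : ∀ k, ∑ j, v j * Q j k = W * v k := by
    intro k
    have := congrFun hv k
    rw [Matrix.vecMul_sub, Matrix.vecMul_smul, Matrix.vecMul_one] at this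
    simp [Matrix.vecMul, dotProduct] at this
    linarith
  have hle : ∀ k ∈ Finset.univ, W * |v k| ≤ ∑ j, |v j| * Q j k := by
    intro k _
    calc W * |v k| = |∑ j, v j * Q j k| := by rw [hv' k, abs_mul, abs_of_nonneg hW0]
      _ ≤ ∑ j, |v j * Q j k| := Finset.abs_sum_le_sum_abs _ _
      _ = _ := by
        refine Finset.sum_congr rfl fun j _ => ?_
        rw [abs_mul, abs_of_nonneg (hQ0 j k)]
  have hsum : ∑ k, W * |v k| = ∑ k, ∑ j, |v j| * Q j k := by
    rw [Finset.sum_comm]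
    refine Finset.sum_congr rfl fun j _ => ?_
    rw [← Finset.mul_sum, hrow, mul_comm]
  have heq := (Finset.sum_eq_sum_iff_of_le hle).mp hsum
  set T := ∑ j, |v j| with hT
  have hTpos : 0 < T := by
    obtain ⟨j, hj⟩ := Function.ne_iff.mp hv0
    exact Finset.sum_pos' (fun j _ => abs_nonneg _) ⟨j, Finset.mem_univ _, abs_pos.mpr hj⟩
  have key : ∀ g : Fin n → ℝ, ∑ s, w s * ∑ j, |v j| * g (s j) = W * ∑ j, |v j| * g j := by
    intro g
    calc ∑ s, w s * ∑ j, |v j| * g (s j) = ∑ j, |v j| * ∑ s, w s * g (s j) := by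
          simp only [Finset.mul_sum]
          rw [Finset.sum_comm]
          exact Finset.sum_congr rfl fun _ _ => Finset.sum_congr rfl fun _ _ => by ring
      _ = ∑ j, |v j| * ∑ k, Q j k * g k := by simp only [hQg]
      _ = ∑ k, (∑ j, |v j| * Q j k) * g k := by
          simp only [Finset.mul_sum, Finset.sum_mul]
          rw [Finset.sum_comm]
          exact Finset.sum_congr rfl fun _ _ => Finset.sum_congr rfl fun _ _ => by ring
      _ = _ := by
          rw [Finset.mul_sum]
          refine Finset.sum_congr rfl fun k hk => ?_
          rw [← heq k hk]; ring
  refine ⟨fun j => T⁻¹ * |v j|, fun j => by positivity, ?_, fun g => ?_⟩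
  · rw [← Finset.mul_sum, ← hT]; exact inv_mul_cancel₀ hTpos.ne'
  · have := key (fun j => T⁻¹ * g j)
    simp only [mul_left_comm _ T⁻¹, ← mul_assoc T⁻¹] at this
    simpa only [mul_assoc] using this

/-- Resampling one coordinate. -/
lemma sum_update {m n : ℕ} (i : Fin m) (F : (Fin m → Fin n) → Fin n → ℝ) :
    ∑ a : Fin m → Fin n, ∑ j : Fin n, F (Function.update a i j) (a i) =
      ∑ a : Fin m → Fin n, ∑ j : Fin n, F a j := by
  rw [← Fintype.sum_prod_type', ← Fintype.sum_prod_type']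
  refine Finset.sum_nbij' (fun x => (Function.update x.1 i x.2, x.1 i))
    (fun x => (Function.update x.1 i x.2, x.1 i)) ?_ ?_ ?_ ?_ ?_ <;> simp

/-- Invariance of the product of stationary distributions. -/
lemma product_invariant {m n : ℕ} (hn : 1 ≤ n) (p : Fin m → Fin n → ℝ) (i : Fin m)
    (w : (Fin n → Fin n) → ℝ)
    (hp : ∀ g : Fin n → ℝ, ∑ s, w s * ∑ j, p i j * g (s j) = (∑ s, w s) * ∑ j, p i j * g j)
    (f : (Fin m → Fin n) → ℝ) :
    ∑ s, w s * ∑ a : Fin m → Fin n, (∏ k, p k (a k)) * f (Function.update a i (s (a i))) =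
      (∑ s, w s) * ∑ a : Fin m → Fin n, (∏ k, p k (a k)) * f a := by
  classical
  let R : (Fin m → Fin n) → ℝ := fun a => ∏ k ∈ Finset.univ.erase i, p k (a k)
  have hR : ∀ a j, ∏ k, p k (Function.update a i j k) = p i j * R a := by
    intro a j
    rw [← Finset.mul_prod_erase _ _ (Finset.mem_univ i)]
    simp only [Function.update_self, R]
    congr 1
    refine Finset.prod_congr rfl fun k hk => ?_
    rw [Function.update_of_ne (Finset.ne_of_mem_erase hk)]
  have hn0 : (n : ℝ) ≠ 0 := by positivity
  have avg : ∀ s : Fin n → Fin n,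
      (n : ℝ) * ∑ a : Fin m → Fin n, (∏ k, p k (a k)) * f (Function.update a i (s (a i))) =
        ∑ a, R a * ∑ j, p i j * f (Function.update a i (s j)) := by
    intro s
    have h := sum_update i (fun (a : Fin m → Fin n) (_ : Fin n) =>
      (∏ k, p k (a k)) * f (Function.update a i (s (a i))))
    simp only [hR, Function.update_self, Function.update_idem, Finset.sum_const,
      Finset.card_univ, Fintype.card_fin, nsmul_eq_mul] at h
    rw [Finset.mul_sum, ← h]
    refine Finset.sum_congr rfl fun a _ => ?_
    rw [Finset.mul_sum]
    exact Finset.sum_congr rfl fun j _ => by ring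
  have avg_id := avg id
  simp only [id, Function.update_eq_self] at avg_id
  apply mul_left_cancel₀ hn0
  calc _ = ∑ s, w s * ((n : ℝ) * ∑ a : Fin m → Fin n,
        (∏ k, p k (a k)) * f (Function.update a i (s (a i)))) := by
        rw [Finset.mul_sum]; exact Finset.sum_congr rfl fun _ _ => by ring
    _ = ∑ s, w s * ∑ a, R a * ∑ j, p i j * f (Function.update a i (s j)) := by simp only [avg]
    _ = ∑ a, R a * ∑ s, w s * ∑ j, p i j * f (Function.update a i (s j)) := by
        simp only [Finset.mul_sum (s := (Finset.univ : Finset (Fin m → Fin n))),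
          Finset.mul_sum (s := (Finset.univ : Finset (Fin n → Fin n)))]
        rw [Finset.sum_comm]
        exact Finset.sum_congr rfl fun _ _ => Finset.sum_congr rfl fun _ _ => by ring
    _ = ∑ a, R a * ((∑ s, w s) * ∑ j, p i j * f (Function.update a i j)) := by
        refine Finset.sum_congr rfl fun a _ => ?_
        rw [hp (fun j => f (Function.update a i j))]
    _ = (∑ s, w s) * ∑ a, R a * ∑ j, p i j * f (Function.update a i j) := by
        rw [Finset.mul_sum]; exact Finset.sum_congr rfl fun _ _ => by ring
    _ = _ := by rw [← avg_id]; ring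

/-- Exact correlated equilibria exist in finite games. -/
lemma exists_correlated {m n : ℕ} (hn : 1 ≤ n) (u : Fin m → (Fin m → Fin n) → ℝ) :
    ∃ χ : (Fin m → Fin n) → ℝ, (∀ a, 0 ≤ χ a) ∧ (∑ a, χ a = 1) ∧
      ∀ (i : Fin m) (s : Fin n → Fin n),
        ∑ a, χ a * u i a ≤ ∑ a, χ a * u i (Function.update a i (s (a i))) := by
  classical
  let G : ((Fin m → Fin n) → ℝ) →ₗ[ℝ] (Fin m × (Fin n → Fin n) → ℝ) :=
    { toFun := fun χ x => ∑ a, χ a * (u x.1 a - u x.1 (Function.update a x.1 (x.2 (a x.1))))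
      map_add' := by
        intro χ η; ext x
        simp only [Pi.add_apply, add_mul, Finset.sum_add_distrib]
      map_smul' := by
        intro c χ; ext x
        simp only [Pi.smul_apply, smul_eq_mul, RingHom.id_apply, Finset.mul_sum, mul_assoc] }
  have hG : ∀ χ i s, G χ (i, s) =
      ∑ a, χ a * u i a - ∑ a, χ a * u i (Function.update a i (s (a i))) := by
    intro χ i s
    rw [← Finset.sum_sub_distrib]
    exact Finset.sum_congr rfl fun _ _ => by simp only; ring
  by_contra hcon
  have hK : IsCompact (G '' stdSimplex ℝ (Fin m → Fin n)) :=
    (isCompact_stdSimplex ℝ _).image G.continuous_of_finiteDimensional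
  have hKc : Convex ℝ (G '' stdSimplex ℝ (Fin m → Fin n)) :=
    (convex_stdSimplex ℝ _).linear_image G
  have hdisj : Disjoint (G '' stdSimplex ℝ (Fin m → Fin n)) (Set.Iic 0) := by
    rw [Set.disjoint_left]
    rintro _ ⟨χ, hχ, rfl⟩ hle
    refine hcon ⟨χ, hχ.1, hχ.2, fun i s => ?_⟩
    have := hle (i, s)
    rw [hG] at this
    simp only [Pi.zero_apply] at this
    linarith
  obtain ⟨φ, c, d, h1, hcd, h2⟩ :=
    geometric_hahn_banach_compact_closed hKc hK (convex_Iic 0) isClosed_Iic hdisj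
  have hd : d < 0 := by simpa using h2 0 (by simp)
  let w : Fin m × (Fin n → Fin n) → ℝ := fun x => - φ (Pi.single x 1)
  have hw : ∀ x, 0 ≤ w x := by
    intro x
    by_contra hneg
    have hpos : 0 < φ (Pi.single x 1) := by simp only [w] at hneg; linarith
    have := h2 ((d / φ (Pi.single x 1)) • Pi.single x 1) (by
      have : d / φ (Pi.single x 1) ≤ 0 := (div_neg_of_neg_of_pos hd hpos).le
      intro y
      simp only [Pi.smul_apply, smul_eq_mul, Pi.zero_apply, Pi.single_apply]
      split_ifs <;> linarith)
    rw [map_smul, smul_eq_mul, div_mul_cancel₀ _ hpos.ne'] at this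
    exact lt_irrefl _ this
  have hφ : ∀ y, φ y = - ∑ x, w x * y x := by
    intro y
    conv_lhs => rw [pi_eq_sum_univ' y]
    rw [map_sum, ← Finset.sum_neg_distrib]
    refine Finset.sum_congr rfl fun x _ => ?_
    rw [map_smul, smul_eq_mul]
    simp only [w]
    ring
  choose p hp0 hp1 hp using fun i : Fin m =>
    exists_stationary hn (fun s => w (i, s)) (fun s => hw (i, s))
  let χ : (Fin m → Fin n) → ℝ := fun a => ∏ k, p k (a k)
  have hχ : χ ∈ stdSimplex ℝ (Fin m → Fin n) := by
    refine ⟨fun a => Finset.prod_nonneg fun k _ => hp0 k _, ?_⟩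
    simp only [χ]
    rw [← Fintype.prod_sum]
    simp [hp1]
  have h3 := h1 _ ⟨χ, hχ, rfl⟩
  rw [hφ, Fintype.sum_prod_type] at h3
  have h4 : ∑ i, ∑ s, w (i, s) * G χ (i, s) = 0 := by
    refine Finset.sum_eq_zero fun i _ => ?_
    simp only [hG, mul_sub, Finset.sum_sub_distrib]
    rw [product_invariant hn p i (fun s => w (i, s)) (hp i) (u i), Finset.sum_mul, sub_self]
  rw [h4] at h3
  linarith

/-- existence of ε-CSE.  For every `ε > 0`, every finite general-sum MLSF game
(`m` leaders, each with action set `Fin n`, a follower with action set `Fin nf`, leader losses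
`l i : A × B → [0,1]` where `A = Fin m → Fin n`, follower loss `lf : A × B → [0,1]`, and a unique
follower best response `Br a` for every joint leader action `a`) admits an ε-CSE: there is a
probability distribution `χ` on `A` such that for every leader `i` and every swap function
`s : Aᵢ → Aᵢ`,
`E_{a∼χ}[lᵢ(a, Br a)] ≤ E_{a∼χ}[lᵢ(s(aᵢ), a₋ᵢ, Br(s(aᵢ), a₋ᵢ))] + ε`. -/
theorem stmt3 (ε : ℝ) (hε : 0 < ε) (m n nf : ℕ) (hn : 1 ≤ n) (hnf : 1 ≤ nf)
    (l : Fin m → (Fin m → Fin n) → Fin nf → ℝ) (lf : (Fin m → Fin n) → Fin nf → ℝ)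
    (Br : (Fin m → Fin n) → Fin nf)
    (hl : ∀ i a b, l i a b ∈ Set.Icc (0 : ℝ) 1)
    (hlf : ∀ a b, lf a b ∈ Set.Icc (0 : ℝ) 1)
    (hBr : ∀ a b, b ≠ Br a → lf a (Br a) < lf a b) :
    ∃ χ : (Fin m → Fin n) → ℝ, (∀ a, 0 ≤ χ a) ∧ (∑ a, χ a = 1) ∧
      ∀ (i : Fin m) (s : Fin n → Fin n),
        ∑ a, χ a * l i a (Br a) ≤
          (∑ a, χ a *
            l i (Function.update a i (s (a i))) (Br (Function.update a i (s (a i))))) + ε := by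
  obtain ⟨χ, h0, h1, h2⟩ := exists_correlated hn (fun i a => l i a (Br a))
  exact ⟨χ, h0, h1, fun i s => (h2 i s).trans (le_add_of_nonneg_right hε.le)⟩
end
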